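/- For every τ in the complex upper half-plane, β(−1/τ)·(2c(τ) − 1)²·(c(τ) + 1) = 3·(4c(τ)³ + 6c(τ) + 1); equivalently β(−1/τ) = 3 + 27c(τ)/((2c(τ)−1)²(c(τ)+1)). -/

import Mathlib

open Complex

/-- The nome `q = exp(2πiτ)`. -/
noncomputable def nome (τ : ℂ) : ℂ := Complex.exp (2 * Real.pi * I * τ)

/-- Ramanujan's cubic continued fraction, as an infinite product:
`c(τ) = q^{1/3} ∏_{n≥1} (1-q^{6n-1})(1-q^{6n-5})/(1-q^{6n-3})²`. -/
noncomputable def c (τ : ℂ) : ℂ :=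
  Complex.exp (2 * Real.pi * I * τ / 3) *
    ∏' n : ℕ,
      ((1 - nome τ ^ (6 * (n + 1) - 1)) * (1 - nome τ ^ (6 * (n + 1) - 5)) /
        (1 - nome τ ^ (6 * (n + 1) - 3)) ^ 2)

/-- The Dedekind eta function `η(τ) = e^{πiτ/12} ∏_{n≥1} (1 - e^{2πinτ})`. -/
noncomputable def dedekindEta (τ : ℂ) : ℂ :=
  Complex.exp (Real.pi * I * τ / 12) *
    ∏' n : ℕ, (1 - Complex.exp (2 * Real.pi * I * (n + 1) * τ))

/-- `α(τ) = 3 + 27 η(9τ)³/η(τ)³`. -/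
noncomputable def alpha (τ : ℂ) : ℂ :=
  3 + 27 * dedekindEta (9 * τ) ^ 3 / dedekindEta τ ^ 3

/-- `β(τ) = 3 + η(τ/3)³/η(3τ)³`. -/
noncomputable def beta (τ : ℂ) : ℂ :=
  3 + dedekindEta (τ / 3) ^ 3 / dedekindEta (3 * τ) ^ 3

/-!
Write `x = e^{2πiτ/3}`, `y = x³`, `φ` and `ψ` for Ramanujan's theta functions, and
`E(x) = (x; x)_∞`. By the Jacobi triple product, `c(τ) / x` is the quotient of two theta values
with nome `y³`, namely those occurring in the 3-dissection
`φ(-x) = φ(-x⁹) - 2x ∑ y^{3k²} (-y²)^k`, so that `1 - 2c = φ(-x) / φ(-x⁹)`. Through an identity of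
`q`-products that rests only on Euler's `(-q; q)_∞ (q; q²)_∞ = 1`, it also controls the
3-dissection of `ψ`, and `1 + 1/c = ψ(x) / (x ψ(x⁹))`. Since `φ(-x)² ψ(x) = E(x)³`, multiplying
gives `(2c - 1)² (c + 1) / c = E(x)³ / (x E(x⁹)³)`, and by the inversion formula for `η` the
right-hand side is `27 / (β(-1/τ) - 3)`.
-/

open Filter Topology

@[to_additive]
lemma tprod_eq_prod_tprod_equiv {α β ι M : Type*} [CommMonoid M] [TopologicalSpace M]
    [ContinuousMul M] [T3Space M] [Fintype ι] (e : α ≃ β × ι) {f : α → M} (hf : Multipliable f)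
    (h : ∀ i, Multipliable fun b ↦ f (e.symm (b, i))) :
    ∏' a, f a = ∏ i, ∏' b, f (e.symm (b, i)) := by
  have hf' : Multipliable fun p : ι × β ↦ f (e.symm p.swap) :=
    ((Equiv.prodComm ι β).trans e.symm).multipliable_iff.mpr hf
  rw [← ((Equiv.prodComm ι β).trans e.symm).tprod_eq f]
  exact (hf'.tprod_prod' h).trans (tprod_fintype _)

lemma norm_pow_lt_one {q : ℂ} (hq : ‖q‖ < 1) {n : ℕ} (hn : n ≠ 0) : ‖q ^ n‖ < 1 := by
  rw [norm_pow]
  exact pow_lt_one₀ (norm_nonneg q) hq hn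

/-- The infinite `q`-Pochhammer symbol `(a; q)_∞`, in which the theta, eta and cubic continued
fraction products are all expressed. It is a meaningful product only for `‖q‖ < 1`. -/
noncomputable def qPochhammer (a q : ℂ) : ℂ := ∏' n : ℕ, (1 - a * q ^ n)

section qPochhammer

variable {q : ℂ}

lemma multipliable_one_sub_mul_pow (hq : ‖q‖ < 1) (a : ℂ) :
    Multipliable fun n : ℕ ↦ 1 - a * q ^ n := by
  simp only [sub_eq_add_neg]
  apply multipliable_one_add_of_summable
  simpa using (summable_geometric_of_lt_one (norm_nonneg q) hq).mul_left ‖a‖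

lemma qPochhammer_ne_zero (hq : ‖q‖ < 1) {a : ℂ} (ha : ‖a‖ < 1) : qPochhammer a q ≠ 0 := by
  have hlt (n : ℕ) : ‖a * q ^ n‖ < 1 := by
    rw [norm_mul, norm_pow]
    exact mul_lt_one_of_nonneg_of_lt_one_left (norm_nonneg a) ha (pow_le_one₀ (norm_nonneg q) hq.le)
  simp only [qPochhammer, sub_eq_add_neg]
  refine tprod_one_add_ne_zero_of_summable (fun n h ↦ ?_) ?_
  · exact (hlt n).ne (by rw [← add_neg_eq_zero.mp h, norm_one])
  · simpa using (summable_geometric_of_lt_one (norm_nonneg q) hq).mul_left ‖a‖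

lemma qPochhammer_eq_one_sub_mul (hq : ‖q‖ < 1) (a : ℂ) :
    qPochhammer a q = (1 - a) * qPochhammer (a * q) q := by
  have hshift (n : ℕ) : 1 - a * q ^ (n + 1) = 1 - a * q * q ^ n := by ring
  have hm : Multipliable fun n : ℕ ↦ 1 - a * q ^ (n + 1) :=
    (multipliable_one_sub_mul_pow hq (a * q)).congr fun n ↦ (hshift n).symm
  rw [qPochhammer, tprod_eq_zero_mul' (f := fun n ↦ 1 - a * q ^ n) hm, pow_zero, mul_one,
    tprod_congr hshift, qPochhammer]

lemma qPochhammer_mul_neg (hq : ‖q‖ < 1) (a : ℂ) :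
    qPochhammer a q * qPochhammer (-a) q = qPochhammer (a ^ 2) (q ^ 2) := by
  rw [qPochhammer, qPochhammer, ← (multipliable_one_sub_mul_pow hq a).tprod_mul
    (multipliable_one_sub_mul_pow hq (-a)), qPochhammer]
  exact tprod_congr fun n ↦ by ring

lemma qPochhammer_eq_prod (hq : ‖q‖ < 1) (a : ℂ) (m : ℕ) [NeZero m] :
    qPochhammer a q = ∏ j : Fin m, qPochhammer (a * q ^ (j : ℕ)) (q ^ m) := by
  have hterm (j : Fin m) (n : ℕ) :
      1 - a * q ^ ((Nat.divModEquiv m).symm (n, j)) = 1 - a * q ^ (j : ℕ) * (q ^ m) ^ n := by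
    rw [Nat.divModEquiv_symm_apply]
    ring
  rw [qPochhammer, tprod_eq_prod_tprod_equiv (Nat.divModEquiv m)
    (multipliable_one_sub_mul_pow hq a) fun j ↦ ?_]
  · simp only [hterm, qPochhammer]
  · simpa only [hterm] using multipliable_one_sub_mul_pow (norm_pow_lt_one hq (NeZero.ne m)) _

lemma qPochhammer_neg_mul_qPochhammer_sq (hq : ‖q‖ < 1) :
    qPochhammer (-q) q * qPochhammer q (q ^ 2) = 1 := by
  have hne := qPochhammer_ne_zero hq hq
  have hsplit : qPochhammer q q = qPochhammer q (q ^ 2) * qPochhammer (q ^ 2) (q ^ 2) := by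
    simpa [Fin.prod_univ_two, ← sq] using qPochhammer_eq_prod hq q 2
  refine mul_right_cancel₀ hne ?_
  rw [one_mul]
  nth_rw 2 [hsplit]
  rw [← qPochhammer_mul_neg hq q]
  ring

lemma qPochhammer_neg_mul_qPochhammer_sq_coprime_three (hq : ‖q‖ < 1) :
    qPochhammer (-q) (q ^ 3) * qPochhammer (-q ^ 2) (q ^ 3) *
      (qPochhammer q (q ^ 6) * qPochhammer (q ^ 5) (q ^ 6)) = 1 := by
  have heuler := qPochhammer_neg_mul_qPochhammer_sq hq
  have heuler_cube := qPochhammer_neg_mul_qPochhammer_sq (norm_pow_lt_one hq three_ne_zero)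
  rw [qPochhammer_eq_prod hq (-q) 3,
    qPochhammer_eq_prod (norm_pow_lt_one hq two_ne_zero) q 3] at heuler
  simp only [Fin.prod_univ_three, Fin.val_zero, Fin.val_one, Fin.val_two, pow_one, mul_one,
    neg_mul, ← pow_mul, ← pow_succ', Nat.reduceMul, Nat.reduceAdd] at heuler heuler_cube
  linear_combination heuler - qPochhammer (-q) (q ^ 3) * qPochhammer (-q ^ 2) (q ^ 3) *
    (qPochhammer q (q ^ 6) * qPochhammer (q ^ 5) (q ^ 6)) * heuler_cube

lemma continuous_qPochhammer (hq : ‖q‖ < 1) : Continuous fun a ↦ qPochhammer a q := by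
  refine continuous_iff_continuousAt.mpr fun a₀ ↦ ?_
  simp only [ContinuousAt, qPochhammer, sub_eq_add_neg]
  refine tendsto_tprod_one_add_of_dominated_convergence
    (bound := fun n ↦ (‖a₀‖ + 1) * ‖q‖ ^ n)
    ((summable_geometric_of_lt_one (norm_nonneg q) hq).mul_left _)
    (fun n ↦ Continuous.tendsto (by fun_prop) a₀) ?_
  have hnear : ∀ᶠ a in 𝓝 a₀, ‖a‖ < ‖a₀‖ + 1 :=
    continuous_norm.continuousAt.eventually_lt_const (lt_add_one _)
  filter_upwards [hnear] with a ha n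
  rw [norm_neg, norm_mul, norm_pow]
  gcongr

lemma qPochhammer_zpow_of_nonpos (hq0 : q ≠ 0) {m : ℤ} (hm : m ≤ 0) :
    qPochhammer (q ^ m) q = 0 := by
  refine tprod_of_exists_eq_zero ⟨(-m).toNat, ?_⟩
  rw [← zpow_natCast, Int.toNat_of_nonneg (by lia), ← zpow_add₀ hq0, add_neg_cancel, zpow_zero,
    sub_self]

lemma exists_norm_qPochhammer_zpow_le (hq0 : q ≠ 0) (hq : ‖q‖ < 1) :
    ∃ C, ∀ m : ℤ, ‖qPochhammer (q ^ m) q‖ ≤ C := by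
  obtain ⟨C, hC⟩ := (isCompact_closedBall (0 : ℂ) 1).exists_bound_of_continuousOn
    (continuous_qPochhammer hq).continuousOn
  refine ⟨C, fun m ↦ ?_⟩
  rcases le_or_gt m 0 with hm | hm
  · rw [qPochhammer_zpow_of_nonpos hq0 hm, norm_zero]
    exact (norm_nonneg _).trans (hC 0 (by simp))
  · lift m to ℕ using hm.le
    refine hC _ ?_
    rw [mem_closedBall_zero_iff, zpow_natCast, norm_pow]
    exact pow_le_one₀ (norm_nonneg q) hq.le

lemma tendsto_qPochhammer_zpow (hq : ‖q‖ < 1) {ι : Type*} {l : Filter ι} {u : ι → ℤ}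
    (hu : Tendsto u l atTop) : Tendsto (fun i ↦ qPochhammer (q ^ u i) q) l (𝓝 1) := by
  have hpow : Tendsto (fun m : ℤ ↦ q ^ m) atTop (𝓝 0) := by
    rw [← Nat.map_cast_int_atTop, tendsto_map'_iff]
    simpa [Function.comp_def] using tendsto_pow_atTop_nhds_zero_of_norm_lt_one hq
  have hzero : qPochhammer 0 q = 1 := by simp [qPochhammer]
  exact hzero ▸ ((continuous_qPochhammer hq).tendsto 0).comp (hpow.comp hu)

-- The `q`-Pascal rule for Gaussian binomials, with the denominators cleared.
lemma qPochhammer_pascal (hq : ‖q‖ < 1) (a b : ℂ) :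
    (1 - a * b) * (qPochhammer (a * q) q * qPochhammer (b * q) q) =
      qPochhammer (a * q) q * qPochhammer b q +
        b * (qPochhammer a q * qPochhammer (b * q) q) := by
  rw [qPochhammer_eq_one_sub_mul hq a, qPochhammer_eq_one_sub_mul hq b]
  ring

end qPochhammer

/-- Jacobi's theta function as a Laurent series in the multiplicative variable `z`, with nome `q`.
In Ramanujan's notation `φ(-x) = thetaSeries x (-1)` and `2 ψ(x²) = thetaSeries x x`. -/
noncomputable def thetaSeries (q z : ℂ) : ℂ := ∑' k : ℤ, q ^ (k ^ 2) * z ^ k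

section thetaSeries

variable {q z : ℂ}

lemma summable_zpow_sq_mul_zpow (hq0 : q ≠ 0) (hq : ‖q‖ < 1) (hz : z ≠ 0) :
    Summable fun k : ℤ ↦ q ^ (k ^ 2) * z ^ k := by
  have hsum := (summable_jacobiTheta₂_term_iff (Function.Periodic.invQParam 1 z) _).mpr
    (Function.Periodic.im_invQParam_pos_of_norm_lt_one two_pos hq hq0)
  refine hsum.congr fun k ↦ ?_
  nth_rw 2 [← Function.Periodic.qParam_right_inv two_ne_zero hq0]
  nth_rw 2 [← Function.Periodic.qParam_right_inv one_ne_zero hz]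
  rw [jacobiTheta₂_term, Function.Periodic.qParam, Function.Periodic.qParam,
    ← Complex.exp_int_mul, ← Complex.exp_int_mul, ← Complex.exp_add]
  congr 1
  push_cast
  ring

lemma thetaSeries_inv (q z : ℂ) : thetaSeries q z⁻¹ = thetaSeries q z := by
  rw [thetaSeries, ← (Equiv.neg ℤ).tsum_eq, thetaSeries]
  simp

lemma thetaSeries_eq_mul_thetaSeries_sq_mul (hq : q ≠ 0) (hz : z ≠ 0) :
    thetaSeries q z = q * z * thetaSeries q (q ^ 2 * z) := by
  rw [thetaSeries, ← (Equiv.addRight (1 : ℤ)).tsum_eq, thetaSeries, ← tsum_mul_left]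
  refine tsum_congr fun k ↦ ?_
  rw [Equiv.coe_addRight, mul_zpow, ← zpow_natCast q 2, ← zpow_mul, zpow_add_one₀ hz,
    show (k + 1) ^ 2 = k ^ 2 + 2 * k + 1 by ring, zpow_add_one₀ hq, zpow_add₀ hq]
  push_cast
  ring

lemma thetaSeries_eq_sum (hq0 : q ≠ 0) (hq : ‖q‖ < 1) (hz : z ≠ 0) (m : ℕ) [NeZero m] :
    thetaSeries q z = ∑ j : Fin m, q ^ ((j : ℕ) ^ 2) * z ^ (j : ℕ) *
      thetaSeries (q ^ (m ^ 2)) (q ^ (2 * m * j) * z ^ m) := by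
  have hsum := summable_zpow_sq_mul_zpow hq0 hq hz
  rw [thetaSeries, tsum_eq_sum_tsum_equiv (Int.divModEquiv m) hsum fun j ↦
    hsum.comp_injective ((Int.divModEquiv m).symm.injective.comp (Prod.mk_left_injective j))]
  refine Finset.sum_congr rfl fun j _ ↦ ?_
  rw [thetaSeries, ← tsum_mul_left]
  refine tsum_congr fun k ↦ ?_
  simp only [Int.divModEquiv_symm_apply, mul_zpow, ← zpow_natCast, ← zpow_mul]
  rw [← mul_assoc (q ^ _) (q ^ _) (z ^ _), mul_mul_mul_comm, ← zpow_add₀ hq0,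
    ← zpow_add₀ hq0, ← zpow_add₀ hz]
  congr 2 <;> push_cast <;> ring

lemma thetaSeries_three_dissection (hq0 : q ≠ 0) (hq : ‖q‖ < 1) (hz : z ≠ 0) :
    thetaSeries q z = thetaSeries (q ^ 9) (z ^ 3) + q * z * thetaSeries (q ^ 9) (q ^ 6 * z ^ 3) +
      q * z⁻¹ * thetaSeries (q ^ 9) (q ^ 6 * (z ^ 3)⁻¹) := by
  have hlast : thetaSeries (q ^ 9) (q ^ 12 * z ^ 3) =
      (q ^ 3 * z ^ 3)⁻¹ * thetaSeries (q ^ 9) (q ^ 6 * (z ^ 3)⁻¹) := by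
    rw [← thetaSeries_inv,
      thetaSeries_eq_mul_thetaSeries_sq_mul (pow_ne_zero 9 hq0) (by positivity)]
    congr 1
    · field_simp
    · congr 1
      field_simp
  rw [thetaSeries_eq_sum hq0 hq hz 3, Fin.sum_univ_three]
  simp only [Fin.val_zero, Fin.val_one, Fin.val_two, Nat.reduceMul, Nat.reducePow, one_pow,
    zero_pow two_ne_zero, pow_zero, pow_one, mul_zero, mul_one, one_mul, hlast]
  field_simp

/-- The `k`-th term of MacMahon's finite form of the Jacobi triple product. The Gaussian binomial
`[M + N, N + k]` in base `q²` is multiplied through by infinite `q`-Pochhammer symbols: no division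
occurs, and the term vanishes automatically outside `-N ≤ k ≤ M`. -/
noncomputable def tripleTerm (q z : ℂ) (M N : ℕ) (k : ℤ) : ℂ :=
  q ^ (k ^ 2) * z ^ k *
    (qPochhammer ((q ^ 2) ^ (N + k + 1)) (q ^ 2) * qPochhammer ((q ^ 2) ^ (M - k + 1)) (q ^ 2))

/-- The product side of MacMahon's finite form of the Jacobi triple product, with the normalisation
of `tripleTerm`. -/
noncomputable def tripleProd (q z : ℂ) (M N : ℕ) : ℂ :=
  qPochhammer (q ^ 2) (q ^ 2) * qPochhammer ((q ^ 2) ^ (M + N + 1)) (q ^ 2) *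
    ((∏ n ∈ Finset.range M, (1 + z * q ^ (2 * n + 1))) *
      ∏ n ∈ Finset.range N, (1 + z⁻¹ * q ^ (2 * n + 1)))

lemma tripleTerm_inv_neg (q z : ℂ) (M N : ℕ) (k : ℤ) :
    tripleTerm q z⁻¹ N M (-k) = tripleTerm q z M N k := by
  simp only [tripleTerm, neg_sq, inv_zpow', neg_neg, sub_neg_eq_add, ← sub_eq_add_neg]
  ring

lemma tripleProd_inv (q z : ℂ) (M N : ℕ) : tripleProd q z⁻¹ N M = tripleProd q z M N := by
  rw [tripleProd, tripleProd, inv_inv, add_comm N M]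
  ring

lemma tripleTerm_succ (hq0 : q ≠ 0) (hq : ‖q‖ < 1) (hz : z ≠ 0) (M N : ℕ) (k : ℤ) :
    (1 - (q ^ 2) ^ (M + N + 1)) * tripleTerm q z (M + 1) N k =
      tripleTerm q z M N k + z * q ^ (2 * M + 1) * tripleTerm q z M N (k - 1) := by
  have hp0 : q ^ 2 ≠ 0 := pow_ne_zero 2 hq0
  have hstep := qPochhammer_pascal (norm_pow_lt_one hq two_ne_zero)
    ((q ^ 2) ^ (N + k)) ((q ^ 2) ^ (M + 1 - k))
  have hab : (q ^ 2) ^ (N + k) * (q ^ 2) ^ (M + 1 - k) = (q ^ 2) ^ (M + N + 1) := by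
    rw [← zpow_natCast (q ^ 2), ← zpow_add₀ hp0]
    congr 1
    push_cast
    ring
  have hqk : z * q ^ (2 * M + 1) * (q ^ ((k - 1) ^ 2) * z ^ (k - 1)) =
      q ^ (k ^ 2) * z ^ k * (q ^ 2) ^ (M + 1 - k) := by
    rw [zpow_sub_one₀ hz, ← zpow_natCast q 2, ← zpow_natCast q (2 * M + 1), ← zpow_mul]
    field_simp
    rw [← zpow_add₀ hq0, ← zpow_add₀ hq0]
    congr 1
    push_cast
    ring
  rw [hab, ← zpow_add_one₀ hp0, ← zpow_add_one₀ hp0] at hstep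
  simp only [tripleTerm, Nat.cast_add, Nat.cast_one]
  rw [show (N : ℤ) + (k - 1) + 1 = N + k by ring, show (M : ℤ) - k + 1 = M + 1 - k by ring,
    show (M : ℤ) - (k - 1) + 1 = M + 1 - k + 1 by ring]
  linear_combination q ^ (k ^ 2) * z ^ k * hstep -
    qPochhammer ((q ^ 2) ^ (N + k)) (q ^ 2) *
      qPochhammer ((q ^ 2) ^ (M + 1 - k + 1)) (q ^ 2) * hqk

lemma one_sub_mul_tripleProd_succ (hq : ‖q‖ < 1) (z : ℂ) (M N : ℕ) :
    (1 - (q ^ 2) ^ (M + N + 1)) * tripleProd q z (M + 1) N =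
      (1 + z * q ^ (2 * M + 1)) * tripleProd q z M N := by
  have hstep := qPochhammer_eq_one_sub_mul (norm_pow_lt_one hq two_ne_zero)
    ((q ^ 2) ^ (M + N + 1))
  rw [← pow_succ] at hstep
  rw [tripleProd, tripleProd, Finset.prod_range_succ, hstep, add_right_comm M 1 N]
  ring

lemma hasSum_tripleTerm_succ (hq0 : q ≠ 0) (hq : ‖q‖ < 1) (hz : z ≠ 0) {M N : ℕ}
    (h : HasSum (tripleTerm q z M N) (tripleProd q z M N)) :
    HasSum (tripleTerm q z (M + 1) N) (tripleProd q z (M + 1) N) := by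
  have hne : 1 - (q ^ 2) ^ (M + N + 1) ≠ 0 := by
    refine sub_ne_zero.mpr fun h1 ↦ ?_
    have := norm_pow_lt_one (norm_pow_lt_one hq two_ne_zero) (M + N).succ_ne_zero
    rw [Nat.succ_eq_add_one, ← h1, norm_one] at this
    exact this.false
  rw [← hasSum_mul_left_iff hne, one_sub_mul_tripleProd_succ hq, one_add_mul]
  simp only [tripleTerm_succ hq0 hq hz]
  exact h.add (((Equiv.subRight (1 : ℤ)).hasSum_iff.mpr h).mul_left _)

lemma hasSum_tripleTerm_zero (hq0 : q ≠ 0) (z : ℂ) :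
    HasSum (tripleTerm q z 0 0) (tripleProd q z 0 0) := by
  have hvanish (k : ℤ) (hk : k < 0) : qPochhammer ((q ^ 2) ^ (k + 1)) (q ^ 2) = 0 :=
    qPochhammer_zpow_of_nonpos (pow_ne_zero 2 hq0) hk
  have hterm : tripleTerm q z 0 0 0 = tripleProd q z 0 0 := by simp [tripleTerm, tripleProd]
  rw [← hterm]
  refine hasSum_single 0 fun k hk ↦ ?_
  rcases hk.lt_or_gt with hk | hk
  · simp only [tripleTerm, Nat.cast_zero, zero_add, hvanish k hk, zero_mul, mul_zero]
  · simp only [tripleTerm, Nat.cast_zero, zero_sub, hvanish (-k) (by lia), mul_zero]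

lemma hasSum_tripleTerm (hq0 : q ≠ 0) (hq : ‖q‖ < 1) (hz : z ≠ 0) (M N : ℕ) :
    HasSum (tripleTerm q z M N) (tripleProd q z M N) := by
  induction M with
  | succ M ih => exact hasSum_tripleTerm_succ hq0 hq hz ih
  | zero =>
    have hswap : HasSum (tripleTerm q z⁻¹ N 0) (tripleProd q z⁻¹ N 0) := by
      induction N with
      | zero => exact hasSum_tripleTerm_zero hq0 z⁻¹
      | succ N ih => exact hasSum_tripleTerm_succ hq0 hq (inv_ne_zero hz) ih
    rw [tripleProd_inv, ← (Equiv.neg ℤ).hasSum_iff] at hswap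
    exact hswap.congr_fun fun k ↦ (tripleTerm_inv_neg q z 0 N k).symm

lemma tendsto_tripleTerm (hq : ‖q‖ < 1) (z : ℂ) (k : ℤ) :
    Tendsto (fun N : ℕ ↦ tripleTerm q z N N k) atTop (𝓝 (q ^ (k ^ 2) * z ^ k)) := by
  have hpoch (j : ℤ) :
      Tendsto (fun N : ℕ ↦ qPochhammer ((q ^ 2) ^ (N + j + 1)) (q ^ 2)) atTop (𝓝 1) :=
    tendsto_qPochhammer_zpow (norm_pow_lt_one hq two_ne_zero) <|
      tendsto_atTop_add_const_right _ 1 <|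
        tendsto_atTop_add_const_right _ j tendsto_natCast_atTop_atTop
  simpa [tripleTerm, sub_eq_add_neg] using
    tendsto_const_nhds.mul ((hpoch k).mul (hpoch (-k)))

lemma tendsto_tsum_tripleTerm (hq0 : q ≠ 0) (hq : ‖q‖ < 1) (hz : z ≠ 0) :
    Tendsto (fun N : ℕ ↦ ∑' k, tripleTerm q z N N k) atTop (𝓝 (thetaSeries q z)) := by
  obtain ⟨C, hC⟩ :=
    exists_norm_qPochhammer_zpow_le (pow_ne_zero 2 hq0) (norm_pow_lt_one hq two_ne_zero)
  refine tendsto_tsum_of_dominated_convergence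
    (bound := fun k ↦ ‖q ^ (k ^ 2) * z ^ k‖ * (C * C))
    ((summable_zpow_sq_mul_zpow hq0 hq hz).norm.mul_right _) (tendsto_tripleTerm hq z)
    (.of_forall fun N k ↦ ?_)
  rw [tripleTerm, norm_mul, norm_mul (qPochhammer _ _)]
  gcongr
  · exact (norm_nonneg _).trans (hC 0)
  · exact hC _
  · exact hC _

lemma tendsto_tripleProd (hq : ‖q‖ < 1) (z : ℂ) :
    Tendsto (fun N ↦ tripleProd q z N N) atTop (𝓝 (qPochhammer (q ^ 2) (q ^ 2) *
      (qPochhammer (-(z * q)) (q ^ 2) * qPochhammer (-(z⁻¹ * q)) (q ^ 2)))) := by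
  have hp := norm_pow_lt_one hq two_ne_zero
  have hfactor (w : ℂ) : Tendsto (fun N ↦ ∏ n ∈ Finset.range N, (1 + w * q ^ (2 * n + 1))) atTop
      (𝓝 (qPochhammer (-(w * q)) (q ^ 2))) := by
    refine (multipliable_one_sub_mul_pow hp (-(w * q))).hasProd.tendsto_prod_nat.congr fun N ↦ ?_
    exact Finset.prod_congr rfl fun n _ ↦ by ring
  have hexp : Tendsto (fun N : ℕ ↦ ((N + N + 1 : ℕ) : ℤ)) atTop atTop :=
    tendsto_natCast_atTop_atTop.comp <|
      tendsto_atTop_mono (f := id) (fun N ↦ show N ≤ N + N + 1 by lia) tendsto_id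
  simpa only [tripleProd, zpow_natCast, mul_one] using
    (tendsto_const_nhds.mul (tendsto_qPochhammer_zpow hp hexp)).mul ((hfactor z).mul (hfactor z⁻¹))

lemma thetaSeries_eq_triple_product (hq0 : q ≠ 0) (hq : ‖q‖ < 1) (hz : z ≠ 0) :
    thetaSeries q z = qPochhammer (q ^ 2) (q ^ 2) *
      (qPochhammer (-(z * q)) (q ^ 2) * qPochhammer (-(z⁻¹ * q)) (q ^ 2)) := by
  have hsum := tendsto_tsum_tripleTerm hq0 hq hz
  simp only [(hasSum_tripleTerm hq0 hq hz _ _).tsum_eq] at hsum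
  exact tendsto_nhds_unique hsum (tendsto_tripleProd hq z)

lemma thetaSeries_neg_one (hq0 : q ≠ 0) (hq : ‖q‖ < 1) :
    thetaSeries q (-1) = qPochhammer (q ^ 2) (q ^ 2) * qPochhammer q (q ^ 2) ^ 2 := by
  rw [thetaSeries_eq_triple_product hq0 hq (neg_ne_zero.mpr one_ne_zero), sq (qPochhammer _ _)]
  norm_num

lemma thetaSeries_neg_one_ne_zero (hq0 : q ≠ 0) (hq : ‖q‖ < 1) : thetaSeries q (-1) ≠ 0 := by
  have hq2 := norm_pow_lt_one hq two_ne_zero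
  rw [thetaSeries_neg_one hq0 hq]
  exact mul_ne_zero (qPochhammer_ne_zero hq2 hq2) (pow_ne_zero 2 (qPochhammer_ne_zero hq2 hq))

lemma thetaSeries_self (hq0 : q ≠ 0) (hq : ‖q‖ < 1) :
    thetaSeries q q = 2 * (qPochhammer (q ^ 2) (q ^ 2) * qPochhammer (-q ^ 2) (q ^ 2) ^ 2) := by
  rw [thetaSeries_eq_triple_product hq0 hq hq0, inv_mul_cancel₀ hq0, ← sq,
    qPochhammer_eq_one_sub_mul (norm_pow_lt_one hq two_ne_zero) (-1), neg_one_mul]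
  ring

lemma thetaSeries_neg_one_sq_mul_thetaSeries_self (hq0 : q ≠ 0) (hq : ‖q‖ < 1) :
    thetaSeries (q ^ 2) (-1) ^ 2 * thetaSeries q q = 2 * qPochhammer (q ^ 2) (q ^ 2) ^ 3 := by
  have hx := norm_pow_lt_one hq two_ne_zero
  have hsplit := qPochhammer_eq_prod hx (q ^ 2) 2
  simp only [Fin.prod_univ_two, Fin.val_zero, Fin.val_one, pow_zero, pow_one, mul_one, ← sq]
    at hsplit
  rw [thetaSeries_neg_one (pow_ne_zero 2 hq0) hx, thetaSeries_self hq0 hq]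
  have heuler := qPochhammer_neg_mul_qPochhammer_sq hx
  generalize q ^ 2 = x at heuler hsplit ⊢
  calc (qPochhammer (x ^ 2) (x ^ 2) * qPochhammer x (x ^ 2) ^ 2) ^ 2 *
        (2 * (qPochhammer x x * qPochhammer (-x) x ^ 2))
      = 2 * (qPochhammer x (x ^ 2) * qPochhammer (x ^ 2) (x ^ 2)) ^ 2 *
          qPochhammer x x * (qPochhammer (-x) x * qPochhammer x (x ^ 2)) ^ 2 := by ring
    _ = 2 * qPochhammer x x ^ 3 := by rw [heuler, ← hsplit]; ring

lemma thetaSeries_neg_one_eq (hq0 : q ≠ 0) (hq : ‖q‖ < 1) :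
    thetaSeries q (-1) =
      thetaSeries (q ^ 9) (-1) - 2 * q * thetaSeries (q ^ 9) (-q ^ 6) := by
  rw [thetaSeries_three_dissection hq0 hq (neg_ne_zero.mpr one_ne_zero),
    Odd.neg_one_pow (by decide), inv_neg_one, mul_neg_one, mul_neg_one]
  ring

lemma thetaSeries_self_eq (hq0 : q ≠ 0) (hq : ‖q‖ < 1) :
    thetaSeries q q =
      q ^ 2 * thetaSeries (q ^ 9) (q ^ 9) + 2 * thetaSeries (q ^ 9) (q ^ 3) := by
  rw [thetaSeries_three_dissection hq0 hq hq0, ← pow_add, mul_inv_cancel₀ hq0,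
    show q ^ 6 * (q ^ 3)⁻¹ = q ^ 3 by field_simp]
  ring

lemma two_mul_thetaSeries_mul_thetaSeries (hq0 : q ≠ 0) (hq : ‖q‖ < 1) :
    2 * thetaSeries (q ^ 3) q * thetaSeries (q ^ 6) (-q ^ 4) =
      thetaSeries (q ^ 3) (q ^ 3) * thetaSeries (q ^ 6) (-1) := by
  have hq2 := norm_pow_lt_one hq two_ne_zero
  have hq3 := norm_pow_lt_one hq three_ne_zero
  have hq6 := norm_pow_lt_one hq (n := 6) (by norm_num)
  have heuler := qPochhammer_neg_mul_qPochhammer_sq (norm_pow_lt_one hq2 three_ne_zero)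
  have hthree := qPochhammer_neg_mul_qPochhammer_sq_coprime_three hq2
  rw [thetaSeries_self (pow_ne_zero 3 hq0) hq3, thetaSeries_neg_one (pow_ne_zero 6 hq0) hq6,
    thetaSeries_eq_triple_product (pow_ne_zero 3 hq0) hq3 hq0,
    thetaSeries_eq_triple_product (pow_ne_zero 6 hq0) hq6 (neg_ne_zero.mpr (pow_ne_zero 4 hq0)),
    show q⁻¹ * q ^ 3 = q ^ 2 by field_simp, show -((-q ^ 4)⁻¹ * q ^ 6) = q ^ 2 by field_simp]
  simp only [neg_mul, neg_neg, ← pow_mul, ← pow_add, ← pow_succ', Nat.reduceMul, Nat.reduceAdd]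
    at heuler hthree ⊢
  linear_combination 2 * qPochhammer (q ^ 6) (q ^ 6) * qPochhammer (q ^ 12) (q ^ 12) *
    (hthree - (qPochhammer (-q ^ 6) (q ^ 6) * qPochhammer (q ^ 6) (q ^ 12) + 1) * heuler)

end thetaSeries

lemma nome_ne_zero (τ : ℂ) : nome τ ≠ 0 := exp_ne_zero _

lemma nome_eq_pow {σ τ : ℂ} (n : ℕ) (h : τ = n * σ) : nome τ = nome σ ^ n := by
  rw [nome, nome, ← exp_nat_mul, h]
  ring_nf

lemma norm_nome_lt_one {τ : ℂ} (hτ : 0 < τ.im) : ‖nome τ‖ < 1 :=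
  UpperHalfPlane.norm_exp_two_pi_I_lt_one ⟨τ, hτ⟩

lemma c_eq_nome_mul_qPochhammer {τ : ℂ} (hτ : 0 < τ.im) :
    c τ = nome (τ / 3) *
      (qPochhammer (nome τ ^ 5) (nome τ ^ 6) * qPochhammer (nome τ) (nome τ ^ 6) /
        qPochhammer (nome τ ^ 3) (nome τ ^ 6) ^ 2) := by
  have hq := norm_nome_lt_one hτ
  have hq6 := norm_pow_lt_one hq (n := 6) (by norm_num)
  have hexp : (2 * Real.pi * I * τ / 3 : ℂ) = 2 * Real.pi * I * (τ / 3) := by ring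
  have hpow (j n : ℕ) : nome τ ^ (6 * n + j) = nome τ ^ j * (nome τ ^ 6) ^ n := by ring
  have hmul (j : ℕ) := multipliable_one_sub_mul_pow hq6 (nome τ ^ j)
  have hden : ∏' n : ℕ, (1 - nome τ ^ 3 * (nome τ ^ 6) ^ n) ^ 2 ≠ 0 := by
    rw [(hmul 3).tprod_pow]
    exact pow_ne_zero 2 (qPochhammer_ne_zero hq6 (norm_pow_lt_one hq three_ne_zero))
  rw [c, hexp, ← nome]
  congr 1
  -- The truncated subtractions in `c` reduce definitionally: `6 * (n + 1) - 1` is `6 * n + 5`.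
  change ∏' n : ℕ, (1 - nome τ ^ (6 * n + 5)) * (1 - nome τ ^ (6 * n + 1)) /
    (1 - nome τ ^ (6 * n + 3)) ^ 2 = _
  simp only [hpow]
  rw [((hmul 5).mul (hmul 1)).tprod_div₀ ((hmul 3).pow 2) hden, (hmul 5).tprod_mul (hmul 1),
    (hmul 3).tprod_pow, pow_one, qPochhammer, qPochhammer, qPochhammer]

lemma c_mul_thetaSeries {τ : ℂ} (hτ : 0 < τ.im) :
    c τ * thetaSeries (nome τ ^ 3) (-1) =
      nome (τ / 3) * thetaSeries (nome τ ^ 3) (-nome τ ^ 2) := by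
  have hq0 := nome_ne_zero τ
  have hq := norm_nome_lt_one hτ
  have hq3 := norm_pow_lt_one hq three_ne_zero
  have hne := qPochhammer_ne_zero (norm_pow_lt_one hq (n := 6) (by norm_num)) hq3
  rw [c_eq_nome_mul_qPochhammer hτ, thetaSeries_neg_one (pow_ne_zero 3 hq0) hq3,
    thetaSeries_eq_triple_product (pow_ne_zero 3 hq0) hq3 (neg_ne_zero.mpr (pow_ne_zero 2 hq0)),
    show -((-nome τ ^ 2)⁻¹ * nome τ ^ 3) = nome τ by field_simp]
  simp only [neg_mul, neg_neg, ← pow_mul, ← pow_add, Nat.reduceMul, Nat.reduceAdd]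
  field_simp

lemma one_sub_two_mul_c_mul_thetaSeries {τ : ℂ} (hτ : 0 < τ.im) :
    (1 - 2 * c τ) * thetaSeries (nome (τ / 3) ^ 9) (-1) = thetaSeries (nome (τ / 3)) (-1) := by
  have hτ3 : 0 < (τ / 3).im := by simpa using hτ
  have hc := c_mul_thetaSeries hτ
  have hnome : nome τ = nome (τ / 3) ^ 3 :=
    nome_eq_pow _ (by push_cast; ring)
  have hdissect := thetaSeries_neg_one_eq (nome_ne_zero _) (norm_nome_lt_one hτ3)
  rw [hnome, ← pow_mul, ← pow_mul] at hc
  linear_combination -hdissect - 2 * hc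

lemma one_add_c_mul_thetaSeries {τ : ℂ} (hτ : 0 < τ.im) :
    (1 + c τ) * (nome (τ / 6) ^ 2 * thetaSeries (nome (τ / 6) ^ 9) (nome (τ / 6) ^ 9)) =
      c τ * thetaSeries (nome (τ / 6)) (nome (τ / 6)) := by
  have hc := c_mul_thetaSeries hτ
  have hs := norm_nome_lt_one (show 0 < (τ / 6).im by simpa using hτ)
  have hs0 := nome_ne_zero (τ / 6)
  have hnome : nome τ = nome (τ / 6) ^ 6 :=
    nome_eq_pow _ (by push_cast; ring)
  have hnome3 : nome (τ / 3) = nome (τ / 6) ^ 2 :=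
    nome_eq_pow _ (by push_cast; ring)
  rw [hnome, hnome3] at hc
  generalize nome (τ / 6) = s at *
  have hdissect := thetaSeries_self_eq hs0 hs
  have hprod := two_mul_thetaSeries_mul_thetaSeries (pow_ne_zero 3 hs0)
    (norm_pow_lt_one hs three_ne_zero)
  have hne := thetaSeries_neg_one_ne_zero (pow_ne_zero 18 hs0)
    (norm_pow_lt_one hs (n := 18) (by norm_num))
  simp only [← pow_mul, Nat.reduceMul] at hc hprod
  refine mul_right_cancel₀ hne ?_
  rw [hdissect]
  linear_combination (-2 * thetaSeries (s ^ 9) (s ^ 3)) * hc - s ^ 2 * hprod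

lemma c_cubic_mul_qPochhammer_cube {τ : ℂ} (hτ : 0 < τ.im) :
    (2 * c τ - 1) ^ 2 * (c τ + 1) *
        (nome (τ / 3) * qPochhammer (nome (τ / 3) ^ 9) (nome (τ / 3) ^ 9) ^ 3) =
      c τ * qPochhammer (nome (τ / 3)) (nome (τ / 3)) ^ 3 := by
  have hφ := one_sub_two_mul_c_mul_thetaSeries hτ
  have hψ := one_add_c_mul_thetaSeries hτ
  have hs := norm_nome_lt_one (show 0 < (τ / 6).im by simpa using hτ)
  have hs0 := nome_ne_zero (τ / 6)
  have hnome3 : nome (τ / 3) = nome (τ / 6) ^ 2 :=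
    nome_eq_pow _ (by push_cast; ring)
  rw [hnome3] at hφ ⊢
  generalize nome (τ / 6) = s at *
  have hE := thetaSeries_neg_one_sq_mul_thetaSeries_self hs0 hs
  have hE9 := thetaSeries_neg_one_sq_mul_thetaSeries_self (pow_ne_zero 9 hs0)
    (norm_pow_lt_one hs (n := 9) (by norm_num))
  simp only [← pow_mul, Nat.reduceMul] at hφ hE9 ⊢
  refine mul_left_cancel₀ two_ne_zero ?_
  calc 2 * ((2 * c τ - 1) ^ 2 * (c τ + 1) * (s ^ 2 * qPochhammer (s ^ 18) (s ^ 18) ^ 3))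
      = ((1 - 2 * c τ) * thetaSeries (s ^ 18) (-1)) ^ 2 *
          ((1 + c τ) * (s ^ 2 * thetaSeries (s ^ 9) (s ^ 9))) := by
        linear_combination -(2 * c τ - 1) ^ 2 * (c τ + 1) * s ^ 2 * hE9
    _ = thetaSeries (s ^ 2) (-1) ^ 2 * (c τ * thetaSeries s s) := by rw [hφ, hψ]
    _ = 2 * (c τ * qPochhammer (s ^ 2) (s ^ 2) ^ 3) := by linear_combination c τ * hE

lemma csqrt_sq_mul {r : ℝ} (hr : 0 < r) (z : ℂ) :
    Complex.sqrt (r ^ 2 * z) = r * Complex.sqrt z := by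
  rcases eq_or_ne z 0 with rfl | hz
  · simp
  have hr0 : (r : ℂ) ≠ 0 := ofReal_ne_zero.mpr hr.ne'
  have hlog : log (r ^ 2 * z) = 2 * log r + log z := by
    rw [← ofReal_pow, log_ofReal_mul (pow_pos hr 2) hz, Real.log_pow, ofReal_mul, ofReal_log hr.le]
    norm_num
  rw [sqrt_eq_exp (mul_ne_zero (pow_ne_zero 2 hr0) hz), sqrt_eq_exp hz, hlog, add_div, exp_add,
    mul_div_cancel_left₀ _ two_ne_zero, exp_log hr0]

lemma dedekindEta_eq_eta (τ : ℂ) : dedekindEta τ = ModularForm.eta τ := by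
  simp only [dedekindEta, ModularForm.eta, Function.Periodic.qParam, ModularForm.eta_q_eq_cexp]
  congr 2
  push_cast
  ring

lemma dedekindEta_neg_one_div {τ : ℂ} (hτ : 0 < τ.im) :
    dedekindEta (-1 / τ) = (Complex.sqrt I)⁻¹ * (Complex.sqrt τ * dedekindEta τ) := by
  rw [dedekindEta_eq_eta, dedekindEta_eq_eta]
  exact ModularForm.eta_comp_eq_csqrt_I_inv hτ

lemma dedekindEta_eq_nome_mul_qPochhammer (τ : ℂ) :
    dedekindEta τ = nome (τ / 24) * qPochhammer (nome τ) (nome τ) := by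
  have hexp : Real.pi * I * τ / 12 = 2 * Real.pi * I * (τ / 24) := by ring
  rw [dedekindEta, qPochhammer, hexp, nome]
  congr 1
  refine tprod_congr fun n ↦ ?_
  rw [← pow_succ', ← nome_eq_pow (n + 1) rfl, nome]
  push_cast
  ring_nf

lemma dedekindEta_ne_zero {τ : ℂ} (hτ : 0 < τ.im) : dedekindEta τ ≠ 0 := by
  rw [dedekindEta_eq_eta]
  exact ModularForm.eta_ne_zero hτ

lemma beta_neg_one_div {τ : ℂ} (hτ : 0 < τ.im) :
    beta (-1 / τ) = 3 + 27 * (dedekindEta (3 * τ) ^ 3 / dedekindEta (τ / 3) ^ 3) := by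
  have hτ0 : τ ≠ 0 := by
    rintro rfl
    exact hτ.ne rfl
  have hτ3 : τ / 3 ≠ 0 := div_ne_zero hτ0 three_ne_zero
  have hsqrt : Complex.sqrt (3 * τ) = 3 * Complex.sqrt (τ / 3) := by
    have h := csqrt_sq_mul three_pos (τ / 3)
    rwa [ofReal_ofNat, show (3 : ℂ) ^ 2 * (τ / 3) = 3 * τ by ring] at h
  have hsqrt0 : Complex.sqrt (τ / 3) ≠ 0 := by
    rw [sqrt_eq_exp hτ3]
    exact exp_ne_zero _
  have hI : Complex.sqrt I ≠ 0 := by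
    rw [sqrt_eq_exp I_ne_zero]
    exact exp_ne_zero _
  have hη : dedekindEta (τ / 3) ≠ 0 := dedekindEta_ne_zero (by simpa using hτ)
  rw [beta, show -1 / τ / 3 = -1 / (3 * τ) by field_simp,
    show 3 * (-1 / τ) = -1 / (τ / 3) by field_simp,
    dedekindEta_neg_one_div (by simpa using hτ), dedekindEta_neg_one_div (by simpa using hτ), hsqrt]
  field_simp
  ring

lemma dedekindEta_cube_div (τ : ℂ) : dedekindEta (3 * τ) ^ 3 / dedekindEta (τ / 3) ^ 3 =
    nome (τ / 3) * qPochhammer (nome (τ / 3) ^ 9) (nome (τ / 3) ^ 9) ^ 3 /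
      qPochhammer (nome (τ / 3)) (nome (τ / 3)) ^ 3 := by
  have hnome9 : nome (3 * τ) = nome (τ / 3) ^ 9 := nome_eq_pow _ (by push_cast; ring)
  have hnome8 : nome (3 * τ / 24) = nome (τ / 3 / 24) ^ 9 := nome_eq_pow _ (by push_cast; ring)
  have hnome24 : nome (τ / 3) = nome (τ / 3 / 24) ^ 24 := nome_eq_pow _ (by push_cast; ring)
  have hprefactor : nome (3 * τ / 24) ^ 3 = nome (τ / 3) * nome (τ / 3 / 24) ^ 3 := by
    rw [hnome8, hnome24]
    ring
  rw [dedekindEta_eq_nome_mul_qPochhammer, dedekindEta_eq_nome_mul_qPochhammer, hnome9, mul_pow,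
    mul_pow, hprefactor, mul_right_comm, mul_comm (nome (τ / 3 / 24) ^ 3),
    mul_div_mul_right _ _ (pow_ne_zero 3 (nome_ne_zero _))]

/-- For `τ` in the upper half-plane,
`β(−1/τ)(2c(τ) − 1)²(c(τ) + 1) = 3(4c(τ)³ + 6c(τ) + 1)`. -/
theorem beta_inversion_cubicCF (τ : ℂ) (hτ : 0 < τ.im) :
    beta (-1 / τ) * (2 * c τ - 1) ^ 2 * (c τ + 1) = 3 * (4 * c τ ^ 3 + 6 * c τ + 1) := by
  have hidentity := c_cubic_mul_qPochhammer_cube hτ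
  have hx := norm_nome_lt_one (show 0 < (τ / 3).im by simpa using hτ)
  have hne := qPochhammer_ne_zero hx hx
  rw [beta_neg_one_div hτ, dedekindEta_cube_div]
  field_simp
  linear_combination 27 * hidentity
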